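/- arXiv:1312.5195 — 2 statements merged into one kernel-verified Lean document; each statement's English description precedes it below -/
import Mathlib

section
/- Let A be a C*-algebra, a, b ∈ A₊ positive elements, and ε > 0 with ‖a − b‖ < ε. Then there exists a contraction d ∈ A such that d* a d = (b − ε)₊, where (b − ε)₊ denotes the positive part of b − ε·1 in the unitization of A. -/
/-!
Fix `‖a - b‖ < δ < ε` and put `η = δ - ‖a - b‖`. A function `e` of `b` turns `b - δ ≤ a - η` into
`(b - ε)₊ = e (b - δ) e ≤ e (a - η)₊ e = x* x`, where `x = (a - η)₊^{1/2} e`. Writing `x = v |x|`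
for the polar decomposition in the bidual, the element `y = v (b - ε)₊^{1/2}` satisfies
`y* y = (b - ε)₊` and `y y* ≤ x x* ≤ (a - η)₊`. It belongs to the algebra, being the norm limit of
`x |x| (|x|² + r)⁻¹ (b - ε)₊^{1/2}` as `r → 0⁺`: `‖x z‖ = ‖|x| z‖` reduces the Cauchy property to
the convergence of `|x|² (|x|² + r)⁻¹ (b - ε)₊^{1/2}` to `(b - ε)₊^{1/2}`. Since `y y* ≤ (a - η)₊`,
only the part of `a` above `η` acts on `y`, so `d = a^{-1/2} y` makes sense and is the contraction
sought.
-/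

open Filter Topology

section Order

variable {A : Type*} [NonUnitalCStarAlgebra A] [PartialOrder A] [StarOrderedRing A]

lemma norm_mul_sq_le_norm_conjugate {p h : A} (hp : p * star p ≤ h) (z : A) :
    ‖z * p‖ ^ 2 ≤ ‖z * h * star z‖ := by
  have key : z * p * star (z * p) ≤ z * h * star z := by
    simpa only [star_mul, mul_assoc] using star_right_conjugate_le_conjugate hp z
  rw [sq, ← CStarRing.norm_self_mul_star]
  exact CStarAlgebra.norm_le_norm_of_nonneg_of_le (mul_star_self_nonneg _) key

lemma mul_mul_star_self_le_of_norm_le_one {e : A} (he : ‖e‖ ≤ 1) (x : A) :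
    x * e * star (x * e) ≤ x * star x := by
  have he' : ‖e * star e‖ ≤ 1 := by
    rw [CStarRing.norm_self_mul_star]
    exact mul_le_one₀ he (norm_nonneg e) he
  calc x * e * star (x * e) = x * (e * star e) * star x := by simp only [star_mul, mul_assoc]
    _ ≤ ‖e * star e‖ • (x * star x) := CStarAlgebra.star_right_conjugate_le_norm_smul
    _ ≤ (1 : ℝ) • (x * star x) := smul_le_smul_of_nonneg_right he' (mul_star_self_nonneg x)
    _ = x * star x := one_smul ℝ _

lemma norm_sub_cfcₙ_mul_sq_le {a p : A} {f m : ℝ → ℝ} {C : ℝ}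
    (hf : ContinuousOn f (quasispectrum ℝ a)) (hf0 : f 0 = 0)
    (hm : ContinuousOn m (quasispectrum ℝ a)) (hm0 : m 0 = 0)
    (hp : p * star p ≤ cfcₙ f a)
    (hC : ∀ t ∈ quasispectrum ℝ a, |f t * (1 - m t) ^ 2| ≤ C) :
    ‖p - cfcₙ m a * p‖ ^ 2 ≤ C := by
  obtain ⟨s, hs⟩ := CStarAlgebra.nonneg_iff_eq_mul_star_self.mp (sub_nonneg.mpr hp)
  have hM : star (cfcₙ m a) = cfcₙ m a := (cfcₙ_predicate m a : IsSelfAdjoint _).star_eq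
  -- Both identities are conjugation by `1 - m(a)`, multiplied out because `A` has no unit.
  have expand : cfcₙ (fun t => f t * (1 - m t) ^ 2) a =
      cfcₙ f a - cfcₙ m a * cfcₙ f a - (cfcₙ f a - cfcₙ m a * cfcₙ f a) * cfcₙ m a := by
    rw [← cfcₙ_mul m f a, ← cfcₙ_sub f _ a, ← cfcₙ_mul _ m a, ← cfcₙ_sub _ _ a]
    exact cfcₙ_congr fun t _ => by ring
  have split : cfcₙ (fun t => f t * (1 - m t) ^ 2) a =
      (p - cfcₙ m a * p) * star (p - cfcₙ m a * p) +
        (s - cfcₙ m a * s) * star (s - cfcₙ m a * s) := by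
    rw [expand, sub_eq_iff_eq_add.mp hs]
    simp only [star_sub, star_mul, hM]
    noncomm_ring
  rw [sq, ← CStarRing.norm_self_mul_star]
  refine (CStarAlgebra.norm_le_norm_of_nonneg_of_le (mul_star_self_nonneg _) ?_).trans
    (norm_cfcₙ_le hC)
  exact split ▸ le_add_of_nonneg_right (mul_star_self_nonneg _)

lemma conjugate_cfcₙ_le_smul {a e : A} {f : ℝ → ℝ} {C : ℝ} (hC : 0 ≤ C)
    (hf : ContinuousOn f (quasispectrum ℝ a)) (hf0 : f 0 = 0)
    (hfC : ∀ t ∈ quasispectrum ℝ a, f t ≤ C) :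
    star e * cfcₙ f a * e ≤ C • (star e * e) := by
  have hle : cfcₙ f a ≤ cfcₙ (fun t => max (f t) 0) a :=
    cfcₙ_mono (fun t _ => le_max_left _ _) hf (by fun_prop) hf0 (by simp [hf0])
  have hnorm : ‖cfcₙ (fun t => max (f t) 0) a‖ ≤ C := norm_cfcₙ_le fun t ht => by
    rw [Real.norm_of_nonneg (le_max_right _ _)]
    exact max_le (hfC t ht) hC
  calc star e * cfcₙ f a * e ≤ star e * cfcₙ (fun t => max (f t) 0) a * e :=
        star_left_conjugate_le_conjugate hle e
    _ ≤ ‖cfcₙ (fun t => max (f t) 0) a‖ • (star e * e) :=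
        CStarAlgebra.star_left_conjugate_le_norm_smul (cfcₙ_predicate _ a)
    _ ≤ C • (star e * e) := smul_le_smul_of_nonneg_right hnorm (star_mul_self_nonneg e)

end Order

section RegularizedInverse

variable {A : Type*} [NonUnitalCStarAlgebra A]

/-- The Tikhonov regularization `q (q² + r)⁻¹` of the inverse of a self-adjoint element `q`. As a
functional calculus by a function vanishing at `0`, it exists without a unit. -/
noncomputable def regularizedInv (q : A) (r : ℝ) : A := cfcₙ (fun t : ℝ => t / (t ^ 2 + r)) q

lemma continuous_div_sq_add {f : ℝ → ℝ} (hf : Continuous f) {r : ℝ} (hr : 0 < r) :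
    Continuous fun t : ℝ => f t / (t ^ 2 + r) :=
  hf.div (by fun_prop) fun t => by positivity

lemma mul_regularizedInv {q : A} (hq : IsSelfAdjoint q) {r : ℝ} (hr : 0 < r) :
    q * regularizedInv q r = cfcₙ (fun t : ℝ => t ^ 2 / (t ^ 2 + r)) q := by
  have hk := continuous_div_sq_add continuous_id hr
  calc q * regularizedInv q r = cfcₙ (fun t : ℝ => t) q * regularizedInv q r := by rw [cfcₙ_id' ℝ q]
    _ = cfcₙ (fun t : ℝ => t * (t / (t ^ 2 + r))) q :=
        (cfcₙ_mul _ _ q (by fun_prop) rfl hk.continuousOn (by simp)).symm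
    _ = cfcₙ (fun t : ℝ => t ^ 2 / (t ^ 2 + r)) q := cfcₙ_congr fun t _ => by ring

lemma norm_mul_regularizedInv_le_one {q : A} (hq : IsSelfAdjoint q) {r : ℝ} (hr : 0 < r) :
    ‖q * regularizedInv q r‖ ≤ 1 := by
  rw [mul_regularizedInv hq hr]
  refine norm_cfcₙ_le fun t _ => ?_
  rw [Real.norm_of_nonneg (by positivity), div_le_one (by positivity)]
  linarith

lemma sq_mul_one_sub_div_sq_add_sq_le {r : ℝ} (hr : 0 < r) (t : ℝ) :
    |t ^ 2 * (1 - t ^ 2 / (t ^ 2 + r)) ^ 2| ≤ r := by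
  have hquot : t ^ 2 * (1 - t ^ 2 / (t ^ 2 + r)) ^ 2 = r * (t ^ 2 * r / (t ^ 2 + r) ^ 2) := by
    field_simp
    ring
  have hle : t ^ 2 * r / (t ^ 2 + r) ^ 2 ≤ 1 := by
    rw [div_le_one (by positivity)]
    nlinarith [sq_nonneg (t ^ 2), mul_nonneg (sq_nonneg t) hr.le]
  rw [abs_of_nonneg (by positivity), hquot]
  exact mul_le_of_le_one_right hr.le hle

end RegularizedInverse

section PolarDecomposition

variable {A : Type*} [NonUnitalCStarAlgebra A] [PartialOrder A] [StarOrderedRing A]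

lemma star_abs_mul_mul_abs_mul (x z : A) :
    star (CFC.abs x * z) * (CFC.abs x * z) = star (x * z) * (x * z) :=
  calc star (CFC.abs x * z) * (CFC.abs x * z) = star z * (CFC.abs x * CFC.abs x) * z := by
        simp only [star_mul, (CFC.abs_nonneg x).star_eq, mul_assoc]
    _ = star (x * z) * (x * z) := by simp only [CFC.abs_mul_abs, star_mul, mul_assoc]

lemma norm_abs_mul (x z : A) : ‖CFC.abs x * z‖ = ‖x * z‖ := by
  rw [← mul_self_inj_of_nonneg (norm_nonneg _) (norm_nonneg _), ← CStarRing.norm_star_mul_self,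
    star_abs_mul_mul_abs_mul, CStarRing.norm_star_mul_self]

lemma tendsto_mul_regularizedInv_mul {q p : A} (hq : IsSelfAdjoint q) (hp : p * star p ≤ q * q) :
    Tendsto (fun r => q * regularizedInv q r * p) (𝓝[>] 0) (𝓝 p) := by
  have hqq : q * q = cfcₙ (fun t : ℝ => t ^ 2) q := by
    conv_lhs => rw [← cfcₙ_id' ℝ q, ← cfcₙ_mul _ _ q]
    simp only [sq]
  have bound : ∀ r : ℝ, 0 < r → ‖q * regularizedInv q r * p - p‖ ≤ √r := fun r hr => by
    rw [norm_sub_rev, mul_regularizedInv hq hr]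
    refine Real.le_sqrt_of_sq_le (norm_sub_cfcₙ_mul_sq_le (by fun_prop) (by simp)
      (continuous_div_sq_add (by fun_prop) hr).continuousOn (by simp) (hqq ▸ hp) fun t _ => ?_)
    exact sq_mul_one_sub_div_sq_add_sq_le hr t
  have hsqrt : Tendsto Real.sqrt (𝓝[>] 0) (𝓝 0) := by
    simpa using (Real.continuous_sqrt.tendsto 0).mono_left nhdsWithin_le_nhds
  rw [tendsto_iff_norm_sub_tendsto_zero]
  exact squeeze_zero' (.of_forall fun _ => norm_nonneg _)
    (eventually_mem_nhdsWithin.mono bound) hsqrt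

lemma exists_tendsto_mul_regularizedInv_mul {x p : A} (hp : p * star p ≤ star x * x) :
    ∃ y, Tendsto (fun r => x * (regularizedInv (CFC.abs x) r * p)) (𝓝[>] 0) (𝓝 y) := by
  have hdist : ∀ r s, dist (x * (regularizedInv (CFC.abs x) r * p))
      (x * (regularizedInv (CFC.abs x) s * p)) = dist (CFC.abs x * regularizedInv (CFC.abs x) r * p)
        (CFC.abs x * regularizedInv (CFC.abs x) s * p) := fun r s => by
    simp only [dist_eq_norm, mul_assoc, ← mul_sub, norm_abs_mul]
  have hcauchy := (tendsto_mul_regularizedInv_mul (CFC.abs_nonneg x).isSelfAdjoint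
    ((CFC.abs_mul_abs x).symm ▸ hp)).cauchy_map
  refine CompleteSpace.complete (f := map _ (𝓝[>] (0 : ℝ))) ?_
  rw [cauchy_map_iff, tendsto_uniformity_iff_dist_tendsto_zero] at hcauchy ⊢
  simpa only [hdist] using hcauchy

lemma mul_regularizedInv_mul_mul_star_self_le {x p : A} (hp : p * star p ≤ star x * x) {r : ℝ}
    (hr : 0 < r) :
    x * (regularizedInv (CFC.abs x) r * p) * star (x * (regularizedInv (CFC.abs x) r * p)) ≤
      x * star x := by
  set q := CFC.abs x
  set k := regularizedInv q r
  have hq : IsSelfAdjoint q := (CFC.abs_nonneg x).isSelfAdjoint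
  have hk : IsSelfAdjoint k := cfcₙ_predicate _ q
  have hkq : ‖k * q‖ ≤ 1 := by
    rw [← norm_star, star_mul, hq.star_eq, hk.star_eq]
    exact norm_mul_regularizedInv_le_one hq hr
  have hp' : p * star p ≤ q * q := (CFC.abs_mul_abs x).symm ▸ hp
  calc x * (k * p) * star (x * (k * p)) = x * k * (p * star p) * star (x * k) := by
        simp only [star_mul, mul_assoc]
    _ ≤ x * k * (q * q) * star (x * k) := star_right_conjugate_le_conjugate hp' _
    _ = x * (k * q) * star (x * (k * q)) := by simp only [star_mul, hq.star_eq, mul_assoc]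
    _ ≤ x * star x := mul_mul_star_self_le_of_norm_le_one hkq x

theorem exists_star_mul_self_eq_of_mul_star_self_le {x p : A} (hp : p * star p ≤ star x * x) :
    ∃ y, star y * y = star p * p ∧ y * star y ≤ x * star x := by
  obtain ⟨y, hy⟩ := exists_tendsto_mul_regularizedInv_mul hp
  have hp_lim := tendsto_mul_regularizedInv_mul (CFC.abs_nonneg x).isSelfAdjoint
    ((CFC.abs_mul_abs x).symm ▸ hp)
  refine ⟨y, tendsto_nhds_unique (hy.star.mul hy) ?_, ?_⟩
  · refine (hp_lim.star.mul hp_lim).congr fun r => ?_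
    rw [mul_assoc (CFC.abs x), star_abs_mul_mul_abs_mul]
  · exact le_of_tendsto (hy.mul hy.star) (eventually_mem_nhdsWithin.mono fun r hr =>
      mul_regularizedInv_mul_mul_star_self_le hp hr)

theorem exists_star_mul_self_eq_of_le_conjugate {c e g : A} (hc : 0 ≤ c) (hg : 0 ≤ g)
    (he : ‖e‖ ≤ 1) (hle : c ≤ star e * g * e) : ∃ y, star y * y = c ∧ y * star y ≤ g := by
  obtain ⟨p, hp, rfl⟩ := CStarAlgebra.nonneg_iff_exists_isSelfAdjoint_and_eq_mul_self.mp hc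
  obtain ⟨w, hw, rfl⟩ := CStarAlgebra.nonneg_iff_exists_isSelfAdjoint_and_eq_mul_self.mp hg
  have hx : p * star p ≤ star (w * e) * (w * e) := by
    simpa only [star_mul, hp.star_eq, hw.star_eq, mul_assoc] using hle
  obtain ⟨y, hy, hyx⟩ := exists_star_mul_self_eq_of_mul_star_self_le hx
  have hxw := mul_mul_star_self_le_of_norm_le_one he w
  rw [hp.star_eq] at hy
  rw [hw.star_eq] at hxw
  exact ⟨y, hy, hyx.trans hxw⟩

end PolarDecomposition

section CutDown

variable {A : Type*} [NonUnitalCStarAlgebra A]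

/-- The cut-down `(b - ε)₊` of a self-adjoint element. The function vanishes at `0`, as the
non-unital functional calculus requires, only for `0 ≤ ε`; for `ε < 0` the value is `0`. -/
noncomputable def cutDown (b : A) (ε : ℝ) : A := cfcₙ (fun t : ℝ => max (t - ε) 0) b

lemma cfcₙ_conjugate_cfcₙ {a : A} {k f : ℝ → ℝ} (hk : ContinuousOn k (quasispectrum ℝ a))
    (hk0 : k 0 = 0) (hf : ContinuousOn f (quasispectrum ℝ a)) (hf0 : f 0 = 0) :
    cfcₙ k a * cfcₙ f a * cfcₙ k a = cfcₙ (fun t => f t * k t ^ 2) a := by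
  rw [← cfcₙ_mul k f a, ← cfcₙ_mul _ k a]
  exact cfcₙ_congr fun t _ => by ring

lemma cfcₙ_conjugate_self {a : A} (ha : IsSelfAdjoint a) {k : ℝ → ℝ}
    (hk : ContinuousOn k (quasispectrum ℝ a)) (hk0 : k 0 = 0) :
    cfcₙ k a * a * cfcₙ k a = cfcₙ (fun t => t * k t ^ 2) a := by
  simpa only [cfcₙ_id' ℝ a] using cfcₙ_conjugate_cfcₙ hk hk0 (continuousOn_id' _) rfl

lemma cfcₙ_conjugate_self_sub_smul {a : A} (ha : IsSelfAdjoint a) (δ : ℝ) {k : ℝ → ℝ}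
    (hk : ContinuousOn k (quasispectrum ℝ a)) (hk0 : k 0 = 0) :
    cfcₙ k a * a * cfcₙ k a - δ • (cfcₙ k a * cfcₙ k a) = cfcₙ (fun t => (t - δ) * k t ^ 2) a := by
  rw [cfcₙ_conjugate_self ha hk hk0, ← cfcₙ_mul k k a, ← cfcₙ_smul δ _ a, ← cfcₙ_sub _ _ a]
  refine cfcₙ_congr fun t _ => ?_
  simp only [smul_eq_mul]
  ring

lemma exists_conjugate_sub_smul_eq_cutDown {b : A} (hb : IsSelfAdjoint b) {δ ε : ℝ} (hε : 0 ≤ ε)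
    (hδ : δ < ε) :
    ∃ e, IsSelfAdjoint e ∧ ‖e‖ ≤ 1 ∧ e * b * e - δ • (e * e) = cutDown b ε := by
  set f : ℝ → ℝ := fun t => √(max (t - ε) 0 / max (t - δ) (ε - δ))
  have hpos : ∀ t, 0 < max (t - δ) (ε - δ) := fun t => lt_max_of_lt_right (sub_pos.mpr hδ)
  have hf : Continuous f :=
    Real.continuous_sqrt.comp (.div (by fun_prop) (by fun_prop) fun t => (hpos t).ne')
  have hf0 : f 0 = 0 := by simp [f, hε]
  have hf_sq : ∀ t, f t ^ 2 = max (t - ε) 0 / max (t - δ) (ε - δ) := fun t =>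
    Real.sq_sqrt (div_nonneg (le_max_right _ _) (hpos t).le)
  refine ⟨cfcₙ f b, cfcₙ_predicate f b, norm_cfcₙ_le fun t _ => ?_, ?_⟩
  · rw [Real.norm_of_nonneg (Real.sqrt_nonneg _)]
    refine Real.sqrt_le_one.mpr ((div_le_one (hpos t)).mpr ?_)
    exact max_le (le_max_of_le_left (by linarith)) (hpos t).le
  · rw [cfcₙ_conjugate_self_sub_smul hb δ hf.continuousOn hf0, cutDown]
    refine cfcₙ_congr fun t _ => ?_
    rw [hf_sq]
    rcases le_total t ε with hle | hle
    · simp [hle]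
    · rw [max_eq_left (sub_le_sub_right hle δ), mul_div_cancel₀]
      linarith

/-- The scalar function `t^{-1/2}` on `[η, ∞)`, extended continuously by `√t / η` to `[0, η]` and by
`0` to the negative half-line, so that it vanishes at `0`. -/
noncomputable def truncatedInvSqrt (η t : ℝ) : ℝ := √t / max t η

lemma continuous_truncatedInvSqrt {η : ℝ} (hη : 0 < η) : Continuous (truncatedInvSqrt η) :=
  Real.continuous_sqrt.div (by fun_prop) fun _ => (lt_max_of_lt_right hη).ne'

lemma truncatedInvSqrt_zero (η : ℝ) : truncatedInvSqrt η 0 = 0 := by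
  simp [truncatedInvSqrt]

lemma truncatedInvSqrt_sq {η t : ℝ} (hη : 0 < η) (ht : η ≤ t) : truncatedInvSqrt η t ^ 2 = t⁻¹ := by
  have hpos : 0 < t := hη.trans_le ht
  rw [truncatedInvSqrt, max_eq_left ht, div_pow, Real.sq_sqrt hpos.le]
  field_simp

lemma max_sub_mul_truncatedInvSqrt_sq_le_one {η : ℝ} (hη : 0 < η) (t : ℝ) :
    max (t - η) 0 * truncatedInvSqrt η t ^ 2 ≤ 1 := by
  rcases le_total t η with ht | ht
  · simp [ht]
  · rw [max_eq_left (sub_nonneg.mpr ht), truncatedInvSqrt_sq hη ht, ← div_eq_mul_inv,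
      div_le_one (hη.trans_le ht)]
    linarith

lemma max_sub_mul_one_sub_mul_truncatedInvSqrt_sq_eq_zero {η : ℝ} (hη : 0 < η) (t : ℝ) :
    max (t - η) 0 * (1 - t * truncatedInvSqrt η t ^ 2) ^ 2 = 0 := by
  rcases le_total t η with ht | ht
  · simp [ht]
  · simp [truncatedInvSqrt_sq hη ht, (hη.trans_le ht).ne']

end CutDown

section Comparison

variable {A : Type*} [NonUnitalCStarAlgebra A] [PartialOrder A] [StarOrderedRing A]

lemma cutDown_nonneg (b : A) (ε : ℝ) : 0 ≤ cutDown b ε :=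
  cfcₙ_nonneg fun _ _ => le_max_right _ _

lemma conjugate_sub_cutDown_le_smul {a : A} (ha : IsSelfAdjoint a) {η : ℝ} (hη : 0 ≤ η) (e : A) :
    star e * (a - cutDown a η) * e ≤ η • (star e * e) := by
  have hsub : a - cutDown a η = cfcₙ (fun t : ℝ => t - max (t - η) 0) a := by
    rw [cfcₙ_sub (fun t : ℝ => t) _ a, cfcₙ_id' ℝ a, cutDown]
  rw [hsub]
  exact conjugate_cfcₙ_le_smul hη (by fun_prop) (by simp [hη])
    fun t _ => by linarith [le_max_left (t - η) 0]

lemma exists_cutDown_le_conjugate_cutDown {a b : A} (ha : IsSelfAdjoint a) (hb : IsSelfAdjoint b)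
    {ε : ℝ} (h : ‖a - b‖ < ε) :
    ∃ η > 0, ∃ e : A, ‖e‖ ≤ 1 ∧ cutDown b ε ≤ star e * cutDown a η * e := by
  obtain ⟨δ, hδ, hδε⟩ := exists_between h
  have hη : 0 < δ - ‖a - b‖ := sub_pos.mpr hδ
  obtain ⟨e, he, he1, hcut⟩ :=
    exists_conjugate_sub_smul_eq_cutDown hb ((norm_nonneg _).trans h.le) hδε
  refine ⟨δ - ‖a - b‖, hη, e, he1, ?_⟩
  have hba : star e * (b - a) * e ≤ ‖a - b‖ • (star e * e) := by
    rw [norm_sub_rev]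
    exact CStarAlgebra.star_left_conjugate_le_norm_smul (hb.sub ha)
  have hag := conjugate_sub_cutDown_le_smul ha hη.le e
  rw [he.star_eq] at hba hag ⊢
  calc cutDown b ε = e * (b - a) * e + e * (a - cutDown a (δ - ‖a - b‖)) * e - δ • (e * e) +
        e * cutDown a (δ - ‖a - b‖) * e := by rw [← hcut]; noncomm_ring
    _ ≤ ‖a - b‖ • (e * e) + (δ - ‖a - b‖) • (e * e) - δ • (e * e) +
        e * cutDown a (δ - ‖a - b‖) * e := by gcongr
    _ = e * cutDown a (δ - ‖a - b‖) * e := by module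

theorem exists_norm_le_one_star_mul_mul_eq {a y : A} (ha : IsSelfAdjoint a) {η : ℝ} (hη : 0 < η)
    (hy : y * star y ≤ cutDown a η) : ∃ d : A, ‖d‖ ≤ 1 ∧ star d * a * d = star y * y := by
  set k := truncatedInvSqrt η
  have hk : Continuous k := continuous_truncatedInvSqrt hη
  have hk0 : k 0 = 0 := truncatedInvSqrt_zero η
  have hkstar : star (cfcₙ k a) = cfcₙ k a := (cfcₙ_predicate k a : IsSelfAdjoint _).star_eq
  refine ⟨cfcₙ k a * y, ?_, ?_⟩
  · have hkgk : ‖cfcₙ k a * cutDown a η * star (cfcₙ k a)‖ ≤ 1 := by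
      rw [hkstar, cutDown, cfcₙ_conjugate_cfcₙ hk.continuousOn hk0 (by fun_prop) (by simp [hη.le])]
      refine norm_cfcₙ_le fun t _ => ?_
      rw [Real.norm_of_nonneg (mul_nonneg (le_max_right _ _) (sq_nonneg _))]
      exact max_sub_mul_truncatedInvSqrt_sq_le_one hη t
    exact (sq_le_one_iff₀ (norm_nonneg _)).mp ((norm_mul_sq_le_norm_conjugate hy _).trans hkgk)
  · have hdefect : ‖y - cfcₙ k a * a * cfcₙ k a * y‖ ^ 2 ≤ 0 := by
      rw [cfcₙ_conjugate_self ha hk.continuousOn hk0]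
      refine norm_sub_cfcₙ_mul_sq_le (by fun_prop) (by simp [hη.le]) (by fun_prop) (by simp) hy ?_
      exact fun t _ => by rw [max_sub_mul_one_sub_mul_truncatedInvSqrt_sq_eq_zero hη t, abs_zero]
    have hfix : cfcₙ k a * a * cfcₙ k a * y = y :=
      (sub_eq_zero.mp (norm_eq_zero.mp ((sq_nonpos_iff _).mp hdefect))).symm
    calc star (cfcₙ k a * y) * a * (cfcₙ k a * y) = star y * (cfcₙ k a * a * cfcₙ k a * y) := by
          simp only [star_mul, hkstar, mul_assoc]
      _ = star y * y := by rw [hfix]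

end Comparison

theorem stmt0_general {A : Type*} [NonUnitalCStarAlgebra A] [PartialOrder A] [StarOrderedRing A]
    (a b : A) (ha : IsSelfAdjoint a) (hb : IsSelfAdjoint b) (ε : ℝ) (h : ‖a - b‖ < ε) :
    ∃ d : A, ‖d‖ ≤ 1 ∧ star d * a * d = cfcₙ (fun t : ℝ => max (t - ε) 0) b := by
  obtain ⟨η, hη, e, he, hle⟩ := exists_cutDown_le_conjugate_cutDown ha hb h
  obtain ⟨y, hy, hya⟩ :=
    exists_star_mul_self_eq_of_le_conjugate (cutDown_nonneg b ε) (cutDown_nonneg a η) he hle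
  obtain ⟨d, hd, hdy⟩ := exists_norm_le_one_star_mul_mul_eq ha hη hya
  exact ⟨d, hd, hdy.trans hy⟩

/-- If `a b ∈ A₊` and `‖a - b‖ < ε`, then there is a contraction `d` with
`d* a d = (b - ε)₊`, the `ε`-cut-down of `b` given by functional calculus. -/
theorem stmt0 {A : Type*} [NonUnitalCStarAlgebra A] [PartialOrder A] [StarOrderedRing A]
    (a b : A) (ha : 0 ≤ a) (hb : 0 ≤ b) (ε : ℝ) (hε : 0 < ε) (h : ‖a - b‖ < ε) :
    ∃ d : A, ‖d‖ ≤ 1 ∧ star d * a * d = cfcₙ (fun t : ℝ => max (t - ε) 0) b :=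
  stmt0_general a b ha.isSelfAdjoint hb.isSelfAdjoint ε h
end

section
/- Let A be a C*-algebra of real rank zero carrying an action σ of a discrete group G with the property that for all projections p, q ∈ A with p ≠ 0, every r ∈ A and every ε > 0 there exist e₁, e₂ ∈ A and g₁, g₂ ∈ G with ‖e₁* p e₁ − σ_{g₁}(p)‖ < ε, ‖e₂* q e₂ − σ_{g₂}(q)‖ < ε and ‖e₁* r e₂‖ < ε. Then σ is G-separating: for all a₁, a₂ ∈ A₊, c ∈ A and ε > 0 there exist d₁, d₂ ∈ A and g₁, g₂ ∈ G with ‖dⱼ* aⱼ dⱼ − σ_{gⱼ}(aⱼ)‖ < ε (j = 1,2) and ‖d₁* c d₂‖ < ε. -/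
/-!
A positive element `a` is close to `b²` with `b` self-adjoint of finite spectrum (approximate `√a`).
Cutting `b` at `η` gives a spectral projection `p`, an inverse `z` of `b` on `p` with `‖z‖ ≤ η⁻¹`,
and `y = p b`. Choosing `b` only after `η` keeps the error `z* (a - b²) z` small, so that
`z* a z ≈ p` and `y* y ≈ a`. If `e` conjugates `p` to `σ_g(p)`, then `d = z p e σ_g(y)` conjugates
`a` to `σ_g(a)`, up to errors governed by `‖y‖² ≈ ‖a‖` and `‖p e‖² ≈ ‖σ_g(p)‖ ≤ 1`, hence
independent of `‖z‖`. Moreover `d₁* c d₂` is a compression of `e₁* r e₂` with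
`r = (z₁ p₁)* c (z₂ p₂)`, so it is small once the projections are separated against this `r`.
-/

theorem norm_star_mul_mul_le {A : Type*} [NonUnitalNormedRing A] [StarRing A]
    [NormedStarGroup A] (x y z : A) : ‖star x * y * z‖ ≤ ‖x‖ * ‖y‖ * ‖z‖ := by
  simpa only [norm_star] using norm_mul₃_le (a := star x) (b := y) (c := z)

theorem star_mul_mul_mul_of_isStarProjection {A : Type*} [Semigroup A] [StarMul A] {p : A}
    (hp : IsStarProjection p) (x : A) : star (p * x) * (p * x) = star x * p * x := by
  rw [star_mul, hp.isSelfAdjoint.star_eq, mul_assoc, ← mul_assoc p, hp.isIdempotentElem.eq,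
    mul_assoc]

theorem norm_star_mul_mul_sub_isStarProjection_le {A : Type*} [NonUnitalNormedRing A] [StarRing A]
    [NormedStarGroup A] {b p z : A} (hp : IsStarProjection p) (hb : IsSelfAdjoint b)
    (hbz : b * z = p) (a : A) : ‖star z * a * z - p‖ ≤ ‖z‖ ^ 2 * ‖a - b * b‖ := by
  have hzb : star z * b = p := by
    rw [← hp.isSelfAdjoint.star_eq, ← hbz, star_mul, hb.star_eq]
  have herror : star z * a * z - p = star z * (a - b * b) * z := by
    calc star z * a * z - p = star z * a * z - (star z * b) * (b * z) := by
          rw [hzb, hbz, hp.isIdempotentElem.eq]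
      _ = star z * (a - b * b) * z := by noncomm_ring
  calc ‖star z * a * z - p‖ ≤ ‖z‖ * ‖a - b * b‖ * ‖z‖ := by
        rw [herror]; exact norm_star_mul_mul_le _ _ _
    _ = ‖z‖ ^ 2 * ‖a - b * b‖ := by ring

section CStarRing

variable {A : Type*} [NonUnitalNormedRing A] [StarRing A] [CStarRing A] {p : A}

theorem norm_star_mul_self_sub_mul_self {b : A} (hp : IsStarProjection p) (hb : IsSelfAdjoint b) :
    ‖star (p * b) * (p * b) - b * b‖ = ‖b - p * b‖ ^ 2 := by
  have hpb : star (p * b) = b * p := by rw [star_mul, hp.isSelfAdjoint.star_eq, hb.star_eq]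
  have hdefect : star (b - p * b) * (b - p * b) = b * b - star (p * b) * (p * b) := by
    rw [star_sub, sub_mul, mul_sub, mul_sub, star_mul_mul_mul_of_isStarProjection hp b, hpb,
      hb.star_eq]
    noncomm_ring
  rw [norm_sub_rev, ← hdefect, CStarRing.norm_star_mul_self, sq]

theorem norm_isStarProjection_mul_sq_le {q e : A} {δ : ℝ} (hp : IsStarProjection p) (hq : ‖q‖ ≤ 1)
    (he : ‖star e * p * e - q‖ ≤ δ) : ‖p * e‖ ^ 2 ≤ 1 + δ := by
  rw [sq, ← CStarRing.norm_star_mul_self, star_mul_mul_mul_of_isStarProjection hp]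
  linarith [norm_le_norm_sub_add (star e * p * e) q]

end CStarRing

section RealRankZero

variable {A : Type*} [NonUnitalCStarAlgebra A]

/-- Real rank zero, encoded as density of the elements of finite spectrum in the self-adjoint part;
the quasispectrum (the spectrum together with `0`) accommodates non-unital algebras. -/
def HasRealRankZero (A : Type*) [NonUnitalCStarAlgebra A] : Prop :=
  ∀ a : A, IsSelfAdjoint a → ∀ δ : ℝ, 0 < δ →
    ∃ b : A, IsSelfAdjoint b ∧ (quasispectrum ℝ b).Finite ∧ ‖a - b‖ < δ

theorem HasRealRankZero.exists_norm_sub_mul_self_lt [PartialOrder A] [StarOrderedRing A]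
    (hA : HasRealRankZero A) {a : A} (ha : 0 ≤ a) {δ : ℝ} (hδ : 0 < δ) :
    ∃ b : A, IsSelfAdjoint b ∧ (quasispectrum ℝ b).Finite ∧ ‖a - b * b‖ < δ := by
  have hsq : Continuous fun b : A => b * b := by fun_prop
  obtain ⟨η, hη, hclose⟩ := Metric.continuous_iff.mp hsq (CFC.sqrt a) δ hδ
  obtain ⟨b, hb, hfin, hab⟩ := hA _ (CFC.sqrt_nonneg a).isSelfAdjoint η hη
  refine ⟨b, hb, hfin, ?_⟩
  simpa only [CFC.sqrt_mul_sqrt_self a, dist_eq_norm'] using hclose b (by rwa [dist_eq_norm'])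

theorem exists_isStarProjection_mul_eq_norm_sub_le {b : A} (hb : IsSelfAdjoint b)
    (hfin : (quasispectrum ℝ b).Finite) {η : ℝ} (hη : 0 < η) :
    ∃ p z : A, IsStarProjection p ∧ b * z = p ∧ ‖z‖ ≤ η⁻¹ ∧ ‖b - p * b‖ ≤ η := by
  set P : ℝ → ℝ := fun t => if η ≤ |t| then 1 else 0 with hP
  set Z : ℝ → ℝ := fun t => if η ≤ |t| then t⁻¹ else 0 with hZ
  have hcont (f : ℝ → ℝ) : ContinuousOn f (quasispectrum ℝ b) := hfin.continuousOn f
  have hP0 : P 0 = 0 := by simp [hP, hη]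
  have hZ0 : Z 0 = 0 := by simp [hZ]
  have hid : cfcₙ (fun t : ℝ => t) b = b := cfcₙ_id' ℝ b
  refine ⟨cfcₙ P b, cfcₙ Z b, ⟨?_, cfcₙ_predicate P b⟩, ?_, ?_, ?_⟩
  · rw [IsIdempotentElem, ← cfcₙ_mul P P b (hcont P) hP0 (hcont P) hP0]
    congr 1 with t
    simp [hP]
  · nth_rw 1 [← hid]
    rw [← cfcₙ_mul _ Z b (hcont _) rfl (hcont Z) hZ0]
    congr 1 with t
    by_cases ht : η ≤ |t|
    · simp [hP, hZ, ht, abs_pos.mp (hη.trans_le ht)]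
    · simp [hP, hZ, ht]
  · refine norm_cfcₙ_le fun t _ => ?_
    by_cases ht : η ≤ |t|
    · simpa [hZ, ht] using inv_anti₀ hη ht
    · simp [hZ, ht, hη.le]
  · have hcut : b - cfcₙ P b * b = cfcₙ (fun t => t - P t * t) b := by
      rw [cfcₙ_sub _ _ b (hcont _) rfl (hcont _) (by simp),
        cfcₙ_mul P _ b (hcont P) hP0 (hcont _) rfl, hid]
    rw [hcut]
    refine norm_cfcₙ_le fun t _ => ?_
    by_cases ht : η ≤ |t|
    · simp [hP, ht, hη.le]
    · simpa [hP, ht] using (not_le.mp ht).le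

end RealRankZero

/-- The projection `p` is, up to an error `δ`, a support projection of the positive element `a`:
`a` is approximately `y* y` with `y ∈ p A`, and `z` compresses `a` approximately to `p`. The usual
exact relation `z* a z = p` is relaxed to the same error `δ`. -/
structure IsApproxSupport {A : Type*} [NonUnitalCStarAlgebra A] (δ : ℝ) (a p y z : A) : Prop where
  isStarProjection : IsStarProjection p
  proj_mul : p * y = y
  norm_conj_sub_le : ‖star z * a * z - p‖ ≤ δ
  norm_star_mul_self_sub_le : ‖star y * y - a‖ ≤ δ

theorem HasRealRankZero.exists_isApproxSupport {A : Type*} [NonUnitalCStarAlgebra A]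
    [PartialOrder A] [StarOrderedRing A] (hA : HasRealRankZero A) {a : A} (ha : 0 ≤ a)
    {δ : ℝ} (hδ : 0 < δ) : ∃ p y z : A, IsApproxSupport δ a p y z := by
  set η := √(δ / 2)
  have hη : 0 < η := by positivity
  have hηsq : η ^ 2 = δ / 2 := Real.sq_sqrt (by positivity)
  obtain ⟨b, hb, hfin, hab⟩ := hA.exists_norm_sub_mul_self_lt ha
    (show 0 < min (δ / 2) (η ^ 2 * δ) by positivity)
  obtain ⟨hab₁, hab₂⟩ := lt_min_iff.mp hab
  obtain ⟨p, z, hp, hbz, hz, hcut⟩ := exists_isStarProjection_mul_eq_norm_sub_le hb hfin hη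
  refine ⟨p, p * b, z, hp, by rw [← mul_assoc, hp.isIdempotentElem.eq], ?_, ?_⟩
  · calc ‖star z * a * z - p‖ ≤ ‖z‖ ^ 2 * ‖a - b * b‖ :=
          norm_star_mul_mul_sub_isStarProjection_le hp hb hbz a
      _ ≤ η⁻¹ ^ 2 * (η ^ 2 * δ) := by gcongr
      _ = δ := by field_simp
  · calc ‖star (p * b) * (p * b) - a‖
        ≤ ‖star (p * b) * (p * b) - b * b‖ + ‖b * b - a‖ := norm_sub_le_norm_sub_add_norm_sub _ _ _
      _ = ‖b - p * b‖ ^ 2 + ‖a - b * b‖ := by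
        rw [norm_star_mul_self_sub_mul_self hp hb, norm_sub_rev (b * b)]
      _ ≤ η ^ 2 + δ / 2 := by gcongr
      _ = δ := by rw [hηsq, add_halves]

namespace IsApproxSupport

variable {A : Type*} [NonUnitalCStarAlgebra A] {δ : ℝ} {a p y z : A}

theorem norm_sq_le (h : IsApproxSupport δ a p y z) : ‖y‖ ^ 2 ≤ ‖a‖ + δ := by
  rw [sq, ← CStarRing.norm_star_mul_self]
  linarith [h.norm_star_mul_self_sub_le, norm_le_norm_add_norm_sub a (star y * y),
    norm_sub_rev a (star y * y)]

theorem norm_conj_sub_map_proj_le (h : IsApproxSupport δ a p y z) (hδ : δ ≤ 1) (τ : A →⋆ₙₐ[ℂ] A)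
    {e : A} (he : ‖star e * p * e - τ p‖ ≤ δ) :
    ‖star (z * (p * e)) * a * (z * (p * e)) - τ p‖ ≤ 3 * δ := by
  have hpe : ‖p * e‖ ^ 2 ≤ 2 := by
    have hτp : ‖τ p‖ ≤ 1 :=
      (NonUnitalStarAlgHom.norm_apply_le τ p).trans (IsStarProjection.norm_le p h.isStarProjection)
    linarith [norm_isStarProjection_mul_sq_le h.isStarProjection hτp he]
  have hsplit : star (z * (p * e)) * a * (z * (p * e)) - τ p
      = star (p * e) * (star z * a * z - p) * (p * e) + (star e * p * e - τ p) := by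
    have hpp : star (p * e) * p * (p * e) = star e * p * e := by
      rw [mul_assoc, ← mul_assoc p, h.isStarProjection.isIdempotentElem.eq,
        star_mul_mul_mul_of_isStarProjection h.isStarProjection]
    rw [mul_sub, sub_mul _ _ (p * e), hpp, star_mul z]
    noncomm_ring
  calc _ ≤ ‖p * e‖ * ‖star z * a * z - p‖ * ‖p * e‖ + ‖star e * p * e - τ p‖ := by
        rw [hsplit]
        exact norm_add_le_of_le (norm_star_mul_mul_le _ _ _) le_rfl
    _ = ‖p * e‖ ^ 2 * ‖star z * a * z - p‖ + ‖star e * p * e - τ p‖ := by ring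
    _ ≤ 2 * δ + δ := by gcongr; exact h.norm_conj_sub_le
    _ = 3 * δ := by ring

theorem norm_conj_sub_map_le (h : IsApproxSupport δ a p y z) (τ : A →⋆ₙₐ[ℂ] A) {x : A} {κ : ℝ}
    (hx : ‖star x * a * x - τ p‖ ≤ κ) :
    ‖star (x * τ y) * a * (x * τ y) - τ a‖ ≤ (‖a‖ + δ) * κ + δ := by
  have hτy : ‖τ y‖ ^ 2 ≤ ‖a‖ + δ :=
    (pow_le_pow_left₀ (norm_nonneg _) (NonUnitalStarAlgHom.norm_apply_le τ y) 2).trans h.norm_sq_le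
  have hsplit : star (x * τ y) * a * (x * τ y) - τ a
      = star (τ y) * (star x * a * x - τ p) * τ y + τ (star y * y - a) := by
    have hyy : τ (star y * y) = star (τ y) * τ p * τ y := by
      rw [mul_assoc, ← map_mul, h.proj_mul, map_mul, map_star]
    rw [map_sub, hyy, star_mul]
    noncomm_ring
  calc _ ≤ ‖τ y‖ * ‖star x * a * x - τ p‖ * ‖τ y‖ + ‖star y * y - a‖ := by
        rw [hsplit]
        exact norm_add_le_of_le (norm_star_mul_mul_le _ _ _)
          (NonUnitalStarAlgHom.norm_apply_le τ _)
    _ = ‖τ y‖ ^ 2 * ‖star x * a * x - τ p‖ + ‖star y * y - a‖ := by ring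
    _ ≤ (‖a‖ + δ) * κ + δ := by
        gcongr
        · exact (sq_nonneg _).trans hτy
        · exact h.norm_star_mul_self_sub_le

end IsApproxSupport

section Separation

variable {A ι : Type*} [NonUnitalCStarAlgebra A] {σ : ι → A →⋆ₙₐ[ℂ] A}

/-- One instance of the `G`-separation inequalities, for given `a₁`, `a₂`, `c` and `ε`. The action
is encoded as an arbitrary family of star endomorphisms. -/
def ApproxSeparates (σ : ι → A →⋆ₙₐ[ℂ] A) (a₁ a₂ c : A) (ε : ℝ) : Prop :=
  ∃ (d₁ d₂ : A) (g₁ g₂ : ι),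
    ‖star d₁ * a₁ * d₁ - σ g₁ a₁‖ < ε ∧ ‖star d₂ * a₂ * d₂ - σ g₂ a₂‖ < ε ∧
    ‖star d₁ * c * d₂‖ < ε

theorem approxSeparates_zero_zero [Nonempty ι] (c : A) {ε : ℝ} (hε : 0 < ε) :
    ApproxSeparates σ 0 0 c ε :=
  let g : ι := Classical.arbitrary ι
  ⟨0, 0, g, g, by simpa, by simpa, by simpa⟩

theorem ApproxSeparates.zero_left {a b c : A} {ε : ℝ} (h : ApproxSeparates σ a b c ε) :
    ApproxSeparates σ 0 b c ε := by
  obtain ⟨_, d₂, g₁, g₂, _, hd₂, hd⟩ := h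
  have hε : 0 < ε := (norm_nonneg _).trans_lt hd
  exact ⟨0, d₂, g₁, g₂, by simpa, hd₂, by simpa⟩

theorem approxSeparates_of_forall_ne_zero [Nonempty ι]
    (hσ : ∀ p q : A, IsStarProjection p → p ≠ 0 → IsStarProjection q →
      ∀ (r : A) (ε : ℝ), 0 < ε → ApproxSeparates σ p q r ε)
    {p q : A} (hp : IsStarProjection p) (hq : IsStarProjection q) (r : A) {ε : ℝ} (hε : 0 < ε) :
    ApproxSeparates σ p q r ε := by
  rcases eq_or_ne p 0 with rfl | hp₀
  · rcases eq_or_ne q 0 with rfl | hq₀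
    · exact approxSeparates_zero_zero r hε
    · exact (hσ q q hq hq₀ hq r ε hε).zero_left
  · exact hσ p q hp hp₀ hq r ε hε

theorem IsApproxSupport.approxSeparates {δ ε : ℝ} {a₁ a₂ p₁ p₂ y₁ y₂ z₁ z₂ c : A}
    (h₁ : IsApproxSupport δ a₁ p₁ y₁ z₁) (h₂ : IsApproxSupport δ a₂ p₂ y₂ z₂) (hδ : δ ≤ 1)
    (hε : 4 * (‖a₁‖ + ‖a₂‖ + 1) * δ < ε)
    (hp : ApproxSeparates σ p₁ p₂ (star (z₁ * p₁) * c * (z₂ * p₂)) δ) :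
    ApproxSeparates σ a₁ a₂ c ε := by
  obtain ⟨e₁, e₂, g₁, g₂, he₁, he₂, he⟩ := hp
  have hδ₀ : 0 ≤ δ := (norm_nonneg _).trans he.le
  have hδε : ∀ t ≤ ‖a₁‖ + ‖a₂‖, (t + δ) * (3 * δ) + δ < ε := fun t ht => by
    calc (t + δ) * (3 * δ) + δ ≤ (‖a₁‖ + ‖a₂‖ + 1) * (3 * δ) + δ := by gcongr
      _ ≤ 4 * (‖a₁‖ + ‖a₂‖ + 1) * δ := by
        linarith [mul_nonneg (norm_nonneg a₁) hδ₀, mul_nonneg (norm_nonneg a₂) hδ₀]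
      _ < ε := hε
  refine ⟨z₁ * (p₁ * e₁) * σ g₁ y₁, z₂ * (p₂ * e₂) * σ g₂ y₂, g₁, g₂, ?_, ?_, ?_⟩
  · have hconj := h₁.norm_conj_sub_map_proj_le hδ (σ g₁) he₁.le
    exact (h₁.norm_conj_sub_map_le (σ g₁) hconj).trans_lt
      (hδε _ (le_add_of_nonneg_right (norm_nonneg a₂)))
  · have hconj := h₂.norm_conj_sub_map_proj_le hδ (σ g₂) he₂.le
    exact (h₂.norm_conj_sub_map_le (σ g₂) hconj).trans_lt
      (hδε _ (le_add_of_nonneg_left (norm_nonneg a₁)))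
  · have hmixed : star (z₁ * (p₁ * e₁) * σ g₁ y₁) * c * (z₂ * (p₂ * e₂) * σ g₂ y₂)
        = star (σ g₁ y₁) * (star e₁ * (star (z₁ * p₁) * c * (z₂ * p₂)) * e₂) * σ g₂ y₂ := by
      simp only [star_mul]
      noncomm_ring
    have hy : ‖y₁‖ * ‖y₂‖ ≤ ‖a₁‖ + ‖a₂‖ + 1 := by
      nlinarith [h₁.norm_sq_le, h₂.norm_sq_le, sq_nonneg (‖y₁‖ - ‖y₂‖), norm_nonneg a₁,
        norm_nonneg a₂]
    calc _ ≤ ‖σ g₁ y₁‖ * ‖star e₁ * (star (z₁ * p₁) * c * (z₂ * p₂)) * e₂‖ * ‖σ g₂ y₂‖ := by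
          rw [hmixed]; exact norm_star_mul_mul_le _ _ _
      _ ≤ ‖y₁‖ * δ * ‖y₂‖ := by
          gcongr <;> exact NonUnitalStarAlgHom.norm_apply_le _ _
      _ = ‖y₁‖ * ‖y₂‖ * δ := by ring
      _ ≤ (‖a₁‖ + ‖a₂‖ + 1) * δ := by gcongr
      _ ≤ 4 * (‖a₁‖ + ‖a₂‖ + 1) * δ := by gcongr; linarith [norm_nonneg a₁, norm_nonneg a₂]
      _ < ε := hε

end Separation

theorem stmt19_general {A ι : Type*} [NonUnitalCStarAlgebra A] [PartialOrder A] [StarOrderedRing A]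
    [Nonempty ι] (σ : ι → A →⋆ₙₐ[ℂ] A) (hA : HasRealRankZero A)
    (hproj : ∀ p q : A, IsStarProjection p → p ≠ 0 → IsStarProjection q →
      ∀ (r : A) (ε : ℝ), 0 < ε → ApproxSeparates σ p q r ε) :
    ∀ a₁ a₂ : A, 0 ≤ a₁ → 0 ≤ a₂ → ∀ (c : A) (ε : ℝ), 0 < ε → ApproxSeparates σ a₁ a₂ c ε := by
  intro a₁ a₂ ha₁ ha₂ c ε hε
  obtain ⟨η, hη, hηε⟩ := exists_pos_mul_lt hε (4 * (‖a₁‖ + ‖a₂‖ + 1))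
  have hδ : 0 < min 1 η := lt_min one_pos hη
  have hδε : 4 * (‖a₁‖ + ‖a₂‖ + 1) * min 1 η < ε :=
    lt_of_le_of_lt (by gcongr; exact min_le_right 1 η) hηε
  obtain ⟨p₁, y₁, z₁, h₁⟩ := hA.exists_isApproxSupport ha₁ hδ
  obtain ⟨p₂, y₂, z₂, h₂⟩ := hA.exists_isApproxSupport ha₂ hδ
  exact h₁.approxSeparates h₂ (min_le_left 1 η) hδε <|
    approxSeparates_of_forall_ne_zero hproj h₁.isStarProjection h₂.isStarProjection _ hδ

/-- If `A` is a C*-algebra of real rank zero (here: self-adjoint elements with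
finite quasispectrum are dense in the self-adjoint part) and the `G`-separation inequalities can
be solved for all projections `p ≠ 0`, `q` of `A`, then the action is `G`-separating. -/
theorem stmt19 {A G : Type*} [NonUnitalCStarAlgebra A] [PartialOrder A] [StarOrderedRing A]
    [Group G]
    (σ : G → A ≃⋆ₐ[ℂ] A) (hσ : ∀ g h x, σ (g * h) x = σ g (σ h x))
    (hRRZ : ∀ a : A, IsSelfAdjoint a → ∀ δ : ℝ, 0 < δ →
      ∃ b : A, IsSelfAdjoint b ∧ (quasispectrum ℝ b).Finite ∧ ‖a - b‖ < δ)
    (hproj : ∀ p q : A, IsSelfAdjoint p → IsIdempotentElem p → p ≠ 0 →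
      IsSelfAdjoint q → IsIdempotentElem q → ∀ r : A, ∀ ε : ℝ, 0 < ε →
        ∃ (e₁ e₂ : A) (g₁ g₂ : G),
          ‖star e₁ * p * e₁ - σ g₁ p‖ < ε ∧ ‖star e₂ * q * e₂ - σ g₂ q‖ < ε ∧
          ‖star e₁ * r * e₂‖ < ε) :
    ∀ a₁ a₂ : A, 0 ≤ a₁ → 0 ≤ a₂ → ∀ c : A, ∀ ε : ℝ, 0 < ε →
      ∃ (d₁ d₂ : A) (g₁ g₂ : G),
        ‖star d₁ * a₁ * d₁ - σ g₁ a₁‖ < ε ∧ ‖star d₂ * a₂ * d₂ - σ g₂ a₂‖ < ε ∧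
        ‖star d₁ * c * d₂‖ < ε := by
  exact stmt19_general (fun g => (σ g : A →⋆ₙₐ[ℂ] A)) hRRZ fun p q hp hp₀ hq =>
    hproj p q hp.isSelfAdjoint hp.isIdempotentElem hp₀ hq.isSelfAdjoint hq.isIdempotentElem
end
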